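/- Gaussian-sum approximation for dyadic singular pieces: there is a constant C > 0 (depending only on k and N₀, hence on d) such that for every j ∈ ℕ, every C¹ kernel K_j : ℝ^k → ℂ supported in {y : 2^{j−2} ≤ ‖y‖ ≤ 2^j} with ‖y‖^k |K_j(y)| + ‖y‖^{k+1} ‖∇K_j(y)‖ ≤ 1 for all y, all reals L₁ ≥ 2^j and L₂ ≥ 1, every integer q with 1 ≤ q ≤ L₃ where L₃ ≤ 2^{j/2}, every a ∈ A_q, and every ξ ∈ [0,1)^d satisfying |ξ_γ − a_γ/q| ≤ L₁^{−|γ|} L₂ for all γ ∈ Γ, one has | m_j(ξ) − G(a/q) Φ_j(ξ − a/q) | ≤ C ( L₃ 2^{−j} + L₂ L₃ 2^{−j} Σ_{γ∈Γ} (2^j/L₁)^{|γ|} ) ≤ C' L₂ L₃ 2^{−j}, where m_j(ξ) = Σ_{y∈ℤ^k} e^{2πi ξ·Q(y)} K_j(y) and Φ_j(ξ) = ∫_{ℝ^k} e^{2πi ξ·Q(y)} K_j(y) dy. -/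

import Mathlib

noncomputable section

/-- The set `Γ` of multi-indices `γ ≠ 0` with `0 ≤ γ_j ≤ N₀`. -/
abbrev Gam (k N₀ : ℕ) := {γ : Fin k → Fin (N₀ + 1) // γ ≠ 0}

/-- The multiplier `m_j(ξ) = Σ_{y ∈ ℤ^k} e^{2πi ξ·Q(y)} K_j(y)` of a dyadic singular piece
along the canonical polynomial mapping `Q`. -/
def mSing (k N₀ : ℕ) (K : EuclideanSpace ℝ (Fin k) → ℂ) (ξ : Gam k N₀ → ℝ) : ℂ :=
  ∑' y : Fin k → ℤ,
    Complex.exp (2 * Real.pi * Complex.I *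
        ((∑ γ : Gam k N₀, ξ γ * ∏ i, (y i : ℝ) ^ ((γ : Fin k → Fin (N₀ + 1)) i : ℕ) : ℝ) : ℂ)) *
      K (WithLp.toLp 2 (fun i => (y i : ℝ)))

/-- The continuous analogue `Φ_j(θ) = ∫_{ℝ^k} e^{2πi θ·Q(y)} K_j(y) dy`. -/
def PhiSing (k N₀ : ℕ) (K : EuclideanSpace ℝ (Fin k) → ℂ) (θ : Gam k N₀ → ℝ) : ℂ :=
  ∫ y : EuclideanSpace ℝ (Fin k),
    Complex.exp (2 * Real.pi * Complex.I *
        ((∑ γ : Gam k N₀, θ γ * ∏ i, (y i) ^ ((γ : Fin k → Fin (N₀ + 1)) i : ℕ) : ℝ) : ℂ)) *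
      K y

/-- The Gaussian sum `G(a/q) = q^{−k} Σ_{r ∈ {1,…,q}^k} e^{2πi (a/q)·Q(r)}`. -/
def gaussSumCan (k N₀ q : ℕ) (a : Gam k N₀ → ℕ) : ℂ :=
  ((q : ℂ) ^ k)⁻¹ *
    ∑ r ∈ Fintype.piFinset fun _ : Fin k => Finset.Icc 1 q,
      Complex.exp (2 * Real.pi * Complex.I *
        ((∑ γ : Gam k N₀, ((a γ : ℝ) / q) *
            ∏ i, (r i : ℝ) ^ ((γ : Fin k → Fin (N₀ + 1)) i : ℕ) : ℝ) : ℂ))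

/-!
Splitting the phase as `ξ·Q = (a/q)·Q + (ξ - a/q)·Q` turns `m_j(ξ)` into a lattice sum `∑ h(y) F(y)`
of the `q`-periodic weight `h = e^{2πi (a/q)·Q}` against the slowly varying function
`F = e^{2πi (ξ - a/q)·Q} K`. Averaging the translated sums `T(t) = ∑ h(y) F(y + t)` over the period
cube `[0, q)^k` decouples the two factors and gives exactly `G(a/q) ∫ F`. Since `F` lives in a ball
of radius `R = 2^j`, `T` is Lipschitz with constant at most `2 (2R + 1)^k Lip(F)`, so `T(0)` is
within `O(q R^k Lip(F))` of this average. Finally, with `θ = ξ - a/q`, differentiating the monomials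
gives `Lip(F) = O(R^{-k-1} (1 + ∑ γ, |θ_γ| R^{|γ|}))`.
-/

open MeasureTheory
open scoped NNReal FourierTransform

section UnitCube

variable {ι : Type*}

variable (ι) in
/-- The half-open cube `[0, 1)^ι`, a fundamental domain of the lattice `ℤ^ι`. -/
def unitCube : Set (ι → ℝ) := Set.univ.pi fun _ => Set.Ico 0 1

lemma measurableSet_unitCube [Countable ι] : MeasurableSet (unitCube ι) :=
  MeasurableSet.univ_pi fun _ => measurableSet_Ico

lemma unitCube_subset_Icc : unitCube ι ⊆ Set.Icc 0 1 := fun _ hu =>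
  ⟨fun i => (hu i trivial).1, fun i => (hu i trivial).2.le⟩

variable [Fintype ι]

lemma volume_unitCube : volume (unitCube ι) = 1 := by
  simp [unitCube, volume_pi_pi]

lemma norm_le_one_of_mem_unitCube {u : ι → ℝ} (hu : u ∈ unitCube ι) : ‖u‖ ≤ 1 :=
  (pi_norm_le_iff_of_nonneg zero_le_one).2 fun i => by
    rw [Real.norm_of_nonneg (hu i trivial).1]
    exact (hu i trivial).2.le

lemma integrableOn_unitCube {F : (ι → ℝ) → ℂ} (hF : Continuous F) :
    IntegrableOn F (unitCube ι) :=
  hF.integrableOn_Icc.mono_set unitCube_subset_Icc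

lemma norm_sub_setIntegral_unitCube_le {F : (ι → ℝ) → ℂ} (hF : Continuous F) {c : ℂ} {M : ℝ}
    (hM : ∀ u ∈ unitCube ι, ‖c - F u‖ ≤ M) : ‖c - ∫ u in unitCube ι, F u‖ ≤ M := by
  have c_eq : c = ∫ _ in unitCube ι, c := by simp [measureReal_def, volume_unitCube]
  rw [c_eq, ← integral_sub (integrableOn_unitCube continuous_const) (integrableOn_unitCube hF)]
  simpa [measureReal_def, volume_unitCube] using
    norm_setIntegral_le_of_norm_le_const (μ := volume) (by simp [volume_unitCube]) hM

lemma integral_eq_tsum_setIntegral_unitCube {F : (ι → ℝ) → ℂ} (hF : Integrable F) :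
    ∫ x, F x = ∑' z : ι → ℤ, ∫ u in unitCube ι, F ((fun i => (z i : ℝ)) + u) := by
  let b := Pi.basisFun ℝ ι
  let coords : (Submodule.span ℤ (Set.range b)).toAddSubgroup ≃ (ι → ℤ) :=
    (b.restrictScalars ℤ).equivFun.toEquiv
  have coe_coords (g) : (fun i => (coords g i : ℝ)) = g := by
    ext i
    exact b.restrictScalars_repr_apply ℤ g i
  have := coords.countable_iff.2 inferInstance
  rw [unitCube, ← ZSpan.fundamentalDomain_pi_basisFun,
    (ZSpan.isAddFundamentalDomain' b volume).integral_eq_tsum'' F hF, ← coords.tsum_eq]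
  refine tsum_congr fun g => ?_
  rw [coe_coords]
  rfl

end UnitCube

section LatticeSums

variable {ι : Type*}

/-- The sum of `F` over the translated lattice `ℤ^ι + t`, with weights `w : ℤ^ι → ℂ`. -/
def latticeSum (w : (ι → ℤ) → ℂ) (F : (ι → ℝ) → ℂ) (t : ι → ℝ) : ℂ :=
  ∑' y : ι → ℤ, w y * F ((fun i => (y i : ℝ)) + t)

lemma latticeSum_int_add (w : (ι → ℤ) → ℂ) (F : (ι → ℝ) → ℂ) (v : ι → ℤ) (t : ι → ℝ) :
    latticeSum w F ((fun i => (v i : ℝ)) + t) = latticeSum (fun z => w (z - v)) F t := by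
  refine Eq.trans (tsum_congr fun y => ?_) ((Equiv.addRight v).tsum_eq _)
  simp only [Equiv.coe_addRight, add_sub_cancel_right, ← add_assoc]
  congr 3
  ext i
  simp

variable [Fintype ι]

/-- The points of `ℤ^ι` whose translate by `t` lies in the closed sup-norm ball of radius `R`. -/
def latticePointsInBall (R : ℝ≥0) (t : ι → ℝ) : Finset (ι → ℤ) :=
  open Classical in Fintype.piFinset fun i => Finset.Icc ⌈-R - t i⌉ ⌊R - t i⌋

lemma mem_latticePointsInBall {R : ℝ≥0} {t : ι → ℝ} {y : ι → ℤ} :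
    y ∈ latticePointsInBall R t ↔ ‖(fun i => (y i : ℝ)) + t‖ ≤ R := by
  simp only [latticePointsInBall, Fintype.mem_piFinset, Finset.mem_Icc, Int.ceil_le, Int.le_floor,
    pi_norm_le_iff_of_nonneg R.coe_nonneg, Pi.add_apply, Real.norm_eq_abs, abs_le,
    sub_le_iff_le_add, le_sub_iff_add_le]

lemma card_latticePointsInBall_le (R : ℝ≥0) (t : ι → ℝ) :
    ((latticePointsInBall R t).card : ℝ) ≤ (2 * R + 1) ^ Fintype.card ι := by
  classical
  have card_Icc_le (i : ι) : ((Finset.Icc ⌈-R - t i⌉ ⌊R - t i⌋).card : ℝ) ≤ 2 * R + 1 := by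
    have length_le : ((⌊R - t i⌋ + 1 - ⌈-R - t i⌉ : ℤ) : ℝ) ≤ 2 * R + 1 := by
      push_cast
      linarith [Int.floor_le (R - t i), Int.le_ceil (-R - t i)]
    rw [Int.card_Icc, ← Int.cast_natCast, Int.toNat_eq_max, Int.cast_max]
    exact max_le length_le (by rw [Int.cast_zero]; positivity)
  calc ((latticePointsInBall R t).card : ℝ)
      = ∏ i, ((Finset.Icc ⌈-R - t i⌉ ⌊R - t i⌋).card : ℝ) := by
        rw [latticePointsInBall, Fintype.card_piFinset, Nat.cast_prod]
    _ ≤ ∏ _ : ι, (2 * R + 1 : ℝ) :=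
        Finset.prod_le_prod (fun _ _ => Nat.cast_nonneg _) fun i _ => card_Icc_le i
    _ = (2 * R + 1) ^ Fintype.card ι := by rw [Finset.prod_const, Finset.card_univ]

variable {D R : ℝ≥0} {F : (ι → ℝ) → ℂ}

lemma apply_add_eq_zero_of_notMem_latticePointsInBall (hF : ∀ x, F x ≠ 0 → ‖x‖ ≤ R)
    {t : ι → ℝ} {y : ι → ℤ} (hy : y ∉ latticePointsInBall R t) :
    F ((fun i => (y i : ℝ)) + t) = 0 := by
  contrapose! hy
  exact mem_latticePointsInBall.2 (hF _ hy)

lemma summable_latticeSum (w : (ι → ℤ) → ℂ) (hF : ∀ x, F x ≠ 0 → ‖x‖ ≤ R) (t : ι → ℝ) :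
    Summable fun y : ι → ℤ => w y * F ((fun i => (y i : ℝ)) + t) :=
  summable_of_ne_finset_zero (s := latticePointsInBall R t) fun y hy => by
    rw [apply_add_eq_zero_of_notMem_latticePointsInBall hF hy, mul_zero]

lemma lipschitzWith_latticeSum {w : (ι → ℤ) → ℂ} (hw : ∀ y, ‖w y‖ ≤ 1)
    (hF : ∀ x, F x ≠ 0 → ‖x‖ ≤ R) (hD : LipschitzWith D F) :
    LipschitzWith (2 * (2 * R + 1) ^ Fintype.card ι * D) (latticeSum w F) := by
  classical
  refine LipschitzWith.of_dist_le_mul fun t t' => ?_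
  set A := latticePointsInBall R t ∪ latticePointsInBall R t' with hA
  have card_A_le : (A.card : ℝ) ≤ 2 * (2 * R + 1) ^ Fintype.card ι := by
    calc (A.card : ℝ)
        ≤ (latticePointsInBall R t).card + (latticePointsInBall R t').card :=
          mod_cast Finset.card_union_le _ _
      _ ≤ 2 * (2 * R + 1) ^ Fintype.card ι := by
          linarith [card_latticePointsInBall_le R t, card_latticePointsInBall_le R t']
  have term_le (y : ι → ℤ) : ‖w y * F ((fun i => (y i : ℝ)) + t) -
      w y * F ((fun i => (y i : ℝ)) + t')‖ ≤ D * dist t t' := by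
    rw [← mul_sub, norm_mul, ← dist_eq_norm (F _)]
    refine (mul_le_of_le_one_left dist_nonneg (hw y)).trans ((hD.dist_le_mul _ _).trans_eq ?_)
    rw [dist_add_left]
  have term_eq_zero (y : ι → ℤ) (hy : y ∉ A) : w y * F ((fun i => (y i : ℝ)) + t) -
      w y * F ((fun i => (y i : ℝ)) + t') = 0 := by
    rw [hA, Finset.notMem_union] at hy
    rw [apply_add_eq_zero_of_notMem_latticePointsInBall hF hy.1,
      apply_add_eq_zero_of_notMem_latticePointsInBall hF hy.2, sub_self]
  rw [dist_eq_norm, latticeSum, latticeSum,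
    ← (summable_latticeSum w hF t).tsum_sub (summable_latticeSum w hF t'),
    tsum_eq_sum term_eq_zero]
  calc ‖∑ y ∈ A, (w y * F ((fun i => (y i : ℝ)) + t) - w y * F ((fun i => (y i : ℝ)) + t'))‖
      ≤ A.card * (D * dist t t') := by
        simpa using norm_sum_le_of_le A fun y _ => term_le y
    _ ≤ 2 * (2 * R + 1) ^ Fintype.card ι * (D * dist t t') := by gcongr
    _ = _ := by push_cast; ring

/-- Averaging over one period decouples the weight from `F`: as `s` varies, every point of `ℤ^ι`
meets every residue class exactly once. -/
lemma sum_latticeSum_val_add {q : ℕ} [NeZero q] [DecidableEq ι] (hF : ∀ x, F x ≠ 0 → ‖x‖ ≤ R)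
    (h : (ι → ZMod q) → ℂ) (t : ι → ℝ) :
    ∑ s : ι → ZMod q, latticeSum (fun y => h fun i => y i) F ((fun i => ((s i).val : ℝ)) + t) =
      (∑ x, h x) * latticeSum 1 F t := by
  have shift (s : ι → ZMod q) :
      latticeSum (fun y => h fun i => y i) F ((fun i => ((s i).val : ℝ)) + t) =
        latticeSum (fun z => h ((fun i => (z i : ZMod q)) - s)) F t := by
    convert latticeSum_int_add (fun y => h fun i => y i) F (fun i => ((s i).val : ℤ)) t using 5 <;>
      simp
  rw [Finset.sum_congr rfl fun s _ => shift s]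
  simp only [latticeSum]
  rw [← Summable.tsum_finsetSum fun s _ => summable_latticeSum _ hF t, ← tsum_mul_left]
  refine tsum_congr fun z => ?_
  rw [← Finset.sum_mul, Pi.one_apply, one_mul]
  congr 1
  exact (Equiv.subLeft fun i => (z i : ZMod q)).sum_comp h

lemma setIntegral_latticeSum_one_unitCube (hF : ∀ x, F x ≠ 0 → ‖x‖ ≤ R) (hFc : Continuous F) :
    ∫ u in unitCube ι, latticeSum 1 F u = ∫ x, F x := by
  have integrable_F : Integrable F := hFc.integrable_of_hasCompactSupport <|
    .of_support_subset_isCompact (isCompact_closedBall 0 (R : ℝ)) fun x hx => by simpa using hF x hx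
  set A := latticePointsInBall (R + 1) (0 : ι → ℝ)
  have eq_zero {z : ι → ℤ} (hz : z ∉ A) {u : ι → ℝ} (hu : u ∈ unitCube ι) :
      F ((fun i => (z i : ℝ)) + u) = 0 := by
    contrapose! hz
    rw [mem_latticePointsInBall, add_zero]
    calc ‖fun i => (z i : ℝ)‖ ≤ ‖(fun i => (z i : ℝ)) + u‖ + ‖u‖ := by
          simpa using norm_sub_le ((fun i => (z i : ℝ)) + u) u
      _ ≤ R + 1 := add_le_add (hF _ hz) (norm_le_one_of_mem_unitCube hu)
  have integrableOn_translate (z : ι → ℤ) :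
      IntegrableOn (fun u => F ((fun i => (z i : ℝ)) + u)) (unitCube ι) :=
    integrableOn_unitCube (hFc.comp (continuous_const_add _))
  calc ∫ u in unitCube ι, latticeSum 1 F u
      = ∫ u in unitCube ι, ∑ z ∈ A, F ((fun i => (z i : ℝ)) + u) :=
        setIntegral_congr_fun measurableSet_unitCube fun u hu => by
          simp only [latticeSum, Pi.one_apply, one_mul]
          exact tsum_eq_sum fun z hz => eq_zero hz hu
    _ = ∑ z ∈ A, ∫ u in unitCube ι, F ((fun i => (z i : ℝ)) + u) :=
        integral_finsetSum _ fun z _ => integrableOn_translate z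
    _ = ∑' z : ι → ℤ, ∫ u in unitCube ι, F ((fun i => (z i : ℝ)) + u) :=
        (tsum_eq_sum fun z hz => setIntegral_eq_zero_of_forall_eq_zero fun u hu =>
          eq_zero hz hu).symm
    _ = ∫ x, F x := (integral_eq_tsum_setIntegral_unitCube integrable_F).symm

lemma norm_val_add_le {q : ℕ} [NeZero q] (s : ι → ZMod q) {u : ι → ℝ} (hu : u ∈ unitCube ι) :
    ‖(fun i => ((s i).val : ℝ)) + u‖ ≤ q := by
  refine (pi_norm_le_iff_of_nonneg (Nat.cast_nonneg q)).2 fun i => ?_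
  have val_add_one_le : ((s i).val : ℝ) + 1 ≤ q := mod_cast (s i).val_lt
  obtain ⟨nonneg, lt_one⟩ := hu i trivial
  rw [Pi.add_apply, Real.norm_of_nonneg (by positivity)]
  linarith

lemma sum_setIntegral_latticeSum_val_add {q : ℕ} [NeZero q] [DecidableEq ι]
    {h : (ι → ZMod q) → ℂ} (hh : ∀ x, ‖h x‖ ≤ 1) (hF : ∀ x, F x ≠ 0 → ‖x‖ ≤ R)
    (hD : LipschitzWith D F) :
    ∑ s : ι → ZMod q, ∫ u in unitCube ι,
        latticeSum (fun y => h fun i => y i) F ((fun i => ((s i).val : ℝ)) + u) =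
      (∑ x, h x) * ∫ x, F x := by
  have integrableOn_translate (s : ι → ZMod q) : IntegrableOn (fun u =>
      latticeSum (fun y => h fun i => y i) F ((fun i => ((s i).val : ℝ)) + u)) (unitCube ι) :=
    integrableOn_unitCube <|
      (lipschitzWith_latticeSum (fun _ => hh _) hF hD).continuous.comp (continuous_const_add _)
  rw [← integral_finsetSum _ fun s _ => integrableOn_translate s]
  simp only [sum_latticeSum_val_add hF, integral_const_mul,
    setIntegral_latticeSum_one_unitCube hF hD.continuous]

theorem norm_latticeSum_sub_mean_mul_integral_le {q : ℕ} [NeZero q] [DecidableEq ι]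
    {h : (ι → ZMod q) → ℂ} (hh : ∀ x, ‖h x‖ ≤ 1) (hF : ∀ x, F x ≠ 0 → ‖x‖ ≤ R)
    (hD : LipschitzWith D F) :
    ‖latticeSum (fun y => h fun i => y i) F 0 -
        ((q : ℂ) ^ Fintype.card ι)⁻¹ * (∑ x, h x) * ∫ x, F x‖ ≤
      2 * (2 * R + 1) ^ Fintype.card ι * D * q := by
  set T := latticeSum (fun y => h fun i => y i) F
  set L : ℝ≥0 := 2 * (2 * R + 1) ^ Fintype.card ι * D with hL
  have lipschitz_T : LipschitzWith L T := lipschitzWith_latticeSum (fun _ => hh _) hF hD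
  let v (s : ι → ZMod q) : ι → ℝ := fun i => (s i).val
  have deviation_le (s) : ‖T 0 - ∫ u in unitCube ι, T (v s + u)‖ ≤ L * q := by
    refine norm_sub_setIntegral_unitCube_le
      (lipschitz_T.continuous.comp (continuous_const_add _)) fun u hu => ?_
    calc ‖T 0 - T (v s + u)‖ ≤ L * ‖0 - (v s + u)‖ := lipschitz_T.norm_sub_le _ _
      _ ≤ L * q := by
        rw [zero_sub, norm_neg]
        gcongr
        exact norm_val_add_le s hu
  have q_pow_ne_zero : (q : ℂ) ^ Fintype.card ι ≠ 0 := pow_ne_zero _ (NeZero.ne _)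
  have eq_mean_deviation : T 0 - ((q : ℂ) ^ Fintype.card ι)⁻¹ * (∑ x, h x) * ∫ x, F x =
      ((q : ℂ) ^ Fintype.card ι)⁻¹ * ∑ s, (T 0 - ∫ u in unitCube ι, T (v s + u)) := by
    rw [Finset.sum_sub_distrib, sum_setIntegral_latticeSum_val_add hh hF hD, mul_sub, mul_assoc]
    simp [q_pow_ne_zero]
  calc ‖T 0 - ((q : ℂ) ^ Fintype.card ι)⁻¹ * (∑ x, h x) * ∫ x, F x‖
      = ((q : ℝ) ^ Fintype.card ι)⁻¹ * ‖∑ s, (T 0 - ∫ u in unitCube ι, T (v s + u))‖ := by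
        simp [eq_mean_deviation]
    _ ≤ ((q : ℝ) ^ Fintype.card ι)⁻¹ * ((q : ℝ) ^ Fintype.card ι * (L * q)) := by
        gcongr
        simpa using norm_sum_le_of_le Finset.univ fun s _ => deviation_le s
    _ = L * q := inv_mul_cancel_left₀ (mod_cast q_pow_ne_zero) _
    _ = 2 * (2 * R + 1) ^ Fintype.card ι * D * q := by rw [hL]; push_cast; rfl

end LatticeSums

section CanonicalPairing

variable {k N₀ : ℕ}

/-- The total degree `|γ|` of a multi-index. -/
def Gam.degree (γ : Gam k N₀) : ℕ := ∑ i, (γ.1 i : ℕ)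

lemma Gam.degree_le (γ : Gam k N₀) : γ.degree ≤ k * N₀ := by
  calc γ.degree ≤ ∑ _ : Fin k, N₀ := Finset.sum_le_sum fun i _ => Nat.lt_succ_iff.1 (γ.1 i).is_lt
    _ = k * N₀ := by simp

/-- The pairing `θ · Q(y) = ∑ γ, θ_γ y^γ` of a frequency with the canonical polynomial mapping,
over any commutative semiring so that it can be reduced modulo `q`. -/
def canonicalPairing {A : Type*} [CommSemiring A] (θ : Gam k N₀ → A) (y : Fin k → A) : A :=
  ∑ γ, θ γ * ∏ i, y i ^ (γ.1 i : ℕ)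

lemma map_canonicalPairing {A B : Type*} [CommSemiring A] [CommSemiring B] (f : A →+* B)
    (θ : Gam k N₀ → A) (y : Fin k → A) :
    f (canonicalPairing θ y) = canonicalPairing (fun γ => f (θ γ)) fun i => f (y i) := by
  simp only [canonicalPairing, map_sum, map_mul, map_prod, map_pow]

lemma canonicalPairing_add {A : Type*} [CommSemiring A] (θ θ' : Gam k N₀ → A) (y : Fin k → A) :
    canonicalPairing (θ + θ') y = canonicalPairing θ y + canonicalPairing θ' y := by
  simp only [canonicalPairing, Pi.add_apply, add_mul, Finset.sum_add_distrib]

lemma canonicalPairing_div {A : Type*} [Field A] (θ : Gam k N₀ → A) (c : A) (y : Fin k → A) :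
    canonicalPairing (fun γ => θ γ / c) y = canonicalPairing θ y / c := by
  simp only [canonicalPairing, Finset.sum_div, div_mul_eq_mul_div]

lemma exp_two_pi_I_mul_eq_fourierChar (t : ℝ) :
    Complex.exp (2 * Real.pi * Complex.I * (t : ℂ)) = 𝐞 t := by
  rw [Real.fourierChar_apply]
  push_cast
  ring_nf

lemma fourierChar_canonicalPairing_div {q : ℕ} [NeZero q] (a : Gam k N₀ → ℕ) (y : Fin k → ℤ) :
    (𝐞 (canonicalPairing (fun γ => (a γ : ℝ) / q) fun i => (y i : ℝ)) : ℂ) =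
      ZMod.stdAddChar (canonicalPairing (fun γ => (a γ : ZMod q)) fun i => (y i : ZMod q)) := by
  have cast_real := map_canonicalPairing (Int.castRingHom ℝ) (fun γ => (a γ : ℤ)) y
  have cast_zmod := map_canonicalPairing (Int.castRingHom (ZMod q)) (fun γ => (a γ : ℤ)) y
  simp only [eq_intCast, Int.cast_natCast] at cast_real cast_zmod
  rw [← cast_zmod, ZMod.stdAddChar_coe, canonicalPairing_div, ← cast_real,
    ← exp_two_pi_I_mul_eq_fourierChar]
  push_cast
  rw [mul_div_assoc]

lemma sum_piFinset_Icc_natCast {ι M : Type*} [Fintype ι] [DecidableEq ι] [AddCommMonoid M]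
    {q : ℕ} [NeZero q] (h : (ι → ZMod q) → M) :
    ∑ r ∈ Fintype.piFinset fun _ : ι => Finset.Icc 1 q, h (fun i => (r i : ZMod q)) = ∑ x, h x := by
  let S := Fintype.piFinset fun _ : ι => Finset.Icc 1 q
  have injOn_cast : Set.InjOn (fun (r : ι → ℕ) i => (r i : ZMod q)) S := by
    intro r hr s hs hrs
    ext i
    have hr := Finset.mem_Icc.1 (Fintype.mem_piFinset.1 hr i)
    have hs := Finset.mem_Icc.1 (Fintype.mem_piFinset.1 hs i)
    exact ((ZMod.natCast_eq_natCast_iff _ _ _).1 (congrFun hrs i)).eq_of_abs_lt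
      (abs_lt.2 (by omega))
  have image_eq_univ : S.image (fun r i => (r i : ZMod q)) = Finset.univ := by
    refine Finset.eq_univ_of_card _ ?_
    rw [Finset.card_image_of_injOn injOn_cast]
    simp [S, ZMod.card]
  rw [← image_eq_univ, Finset.sum_image injOn_cast]

lemma gaussSumCan_eq_mean {q : ℕ} [NeZero q] (a : Gam k N₀ → ℕ) :
    gaussSumCan k N₀ q a = ((q : ℂ) ^ k)⁻¹ *
      ∑ x : Fin k → ZMod q, ZMod.stdAddChar (canonicalPairing (fun γ => (a γ : ZMod q)) x) := by
  rw [gaussSumCan, ← sum_piFinset_Icc_natCast]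
  congr 1
  refine Finset.sum_congr rfl fun r _ => ?_
  rw [exp_two_pi_I_mul_eq_fourierChar]
  have residue := fourierChar_canonicalPairing_div (q := q) a fun i => (r i : ℤ)
  simp only [Int.cast_natCast] at residue
  exact residue

/-- The oscillating kernel `y ↦ e^{2πi θ·Q(y)} K(y)`. -/
def modulatedKernel (θ : Gam k N₀ → ℝ) (K : EuclideanSpace ℝ (Fin k) → ℂ)
    (y : EuclideanSpace ℝ (Fin k)) : ℂ :=
  𝐞 (canonicalPairing θ y.ofLp) * K y

lemma PhiSing_eq_integral_modulatedKernel (θ : Gam k N₀ → ℝ) (K : EuclideanSpace ℝ (Fin k) → ℂ) :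
    PhiSing k N₀ K θ = ∫ y : Fin k → ℝ, modulatedKernel θ K (WithLp.toLp 2 y) := by
  simp only [PhiSing, exp_two_pi_I_mul_eq_fourierChar]
  exact ((PiLp.volume_preserving_toLp (Fin k)).integral_comp
    (MeasurableEquiv.toLp 2 (Fin k → ℝ)).measurableEmbedding (modulatedKernel θ K)).symm

lemma mSing_eq_latticeSum {q : ℕ} [NeZero q] (a : Gam k N₀ → ℕ) (ξ : Gam k N₀ → ℝ)
    (K : EuclideanSpace ℝ (Fin k) → ℂ) :
    mSing k N₀ K ξ = latticeSum
      (fun y =>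
        ZMod.stdAddChar (canonicalPairing (fun γ => (a γ : ZMod q)) fun i => (y i : ZMod q)))
      (fun y => modulatedKernel (fun γ => ξ γ - (a γ : ℝ) / q) K (WithLp.toLp 2 y)) 0 := by
  simp only [mSing, latticeSum, exp_two_pi_I_mul_eq_fourierChar, add_zero]
  refine tsum_congr fun y => ?_
  have ξ_eq : ξ = (fun γ => (a γ : ℝ) / q) + fun γ => ξ γ - (a γ : ℝ) / q := by
    ext γ
    simp
  rw [← fourierChar_canonicalPairing_div, modulatedKernel, ← mul_assoc, ← Circle.coe_mul,
    ← AddChar.map_add_eq_mul, ← canonicalPairing_add, ← ξ_eq]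
  rfl

end CanonicalPairing

section Derivatives

lemma norm_fderiv_fourierChar_comp_le {E : Type*} [NormedAddCommGroup E] [NormedSpace ℝ E]
    {P : E → ℝ} {y : E} (hP : DifferentiableAt ℝ P y) :
    ‖fderiv ℝ (fun x => (𝐞 (P x) : ℂ)) y‖ ≤ 2 * Real.pi * ‖fderiv ℝ P y‖ := by
  have chain := (Real.hasDerivAt_fourierChar (P y)).hasFDerivAt.comp y hP.hasFDerivAt
  rw [show fderiv ℝ (fun x => (𝐞 (P x) : ℂ)) y = _ from chain.fderiv]
  refine (ContinuousLinearMap.opNorm_comp_le _ _).trans_eq ?_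
  simp [abs_of_pos Real.pi_pos, Circle.norm_coe]

lemma norm_fderiv_monomial_le {ι : Type*} [Fintype ι] (e : ι → ℕ) {y : EuclideanSpace ℝ ι} {R : ℝ}
    (hy : ‖y‖ ≤ R) :
    ‖fderiv ℝ (fun x : EuclideanSpace ℝ ι => ∏ i, x i ^ e i) y‖ ≤
      (∑ i, e i : ℕ) * R ^ (∑ i, e i - 1) := by
  classical
  have norm_fderiv_coord_le (i : ι) :
      ‖fderiv ℝ (fun x : EuclideanSpace ℝ ι => x i) y‖ ≤ 1 := by
    rw [show fderiv ℝ (fun x : EuclideanSpace ℝ ι => x i) y = _ from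
      (EuclideanSpace.proj (𝕜 := ℝ) i).fderiv]
    exact ContinuousLinearMap.opNorm_le_bound _ zero_le_one fun x => by
      simpa using PiLp.norm_apply_le x i
  have norm_pow_coord_le (i : ι) (n : ℕ) : ‖y i ^ n‖ ≤ R ^ n := by
    rw [norm_pow]
    gcongr
    exact (PiLp.norm_apply_le y i).trans hy
  have R_nonneg : 0 ≤ R := (norm_nonneg y).trans hy
  have norm_term_le (i : ι) :
      ‖(∏ j ∈ Finset.univ.erase i, y j ^ e j) •
        fderiv ℝ (fun x : EuclideanSpace ℝ ι => x i ^ e i) y‖ ≤ e i * R ^ (∑ i, e i - 1) := by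
    rcases Nat.eq_zero_or_pos (e i) with he | he
    · simp [he]
    have exponent : ∑ j ∈ Finset.univ.erase i, e j + (e i - 1) = ∑ i, e i - 1 := by
      rw [← Finset.add_sum_erase _ _ (Finset.mem_univ i)]
      omega
    rw [fderiv_fun_pow _ (by fun_prop), norm_smul, norm_smul, norm_prod, nsmul_eq_mul, norm_mul,
      Real.norm_natCast]
    calc (∏ j ∈ Finset.univ.erase i, ‖y j ^ e j‖) * (e i * ‖y i ^ (e i - 1)‖ *
          ‖fderiv ℝ (fun x : EuclideanSpace ℝ ι => x i) y‖)
        ≤ (∏ j ∈ Finset.univ.erase i, R ^ e j) * (e i * R ^ (e i - 1) * 1) := by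
          gcongr
          exacts [norm_pow_coord_le _ _, norm_pow_coord_le _ _, norm_fderiv_coord_le i]
      _ = e i * R ^ (∑ i, e i - 1) := by
          rw [Finset.prod_pow_eq_pow_sum, ← exponent, pow_add]
          ring
  rw [fderiv_finsetProd fun i _ => by fun_prop, Nat.cast_sum, Finset.sum_mul]
  exact (norm_sum_le _ _).trans (Finset.sum_le_sum fun i _ => norm_term_le i)

variable {k N₀ : ℕ}

/-- The size `∑ γ, |θ_γ| R^{|γ|}` of a frequency under the dilations attached to the scale `R`. -/
def anisotropicNorm (R : ℝ) (θ : Gam k N₀ → ℝ) : ℝ := ∑ γ, |θ γ| * R ^ γ.degree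

lemma anisotropicNorm_nonneg {R : ℝ} (hR : 0 ≤ R) (θ : Gam k N₀ → ℝ) : 0 ≤ anisotropicNorm R θ := by
  unfold anisotropicNorm
  positivity

lemma differentiable_canonicalPairing (θ : Gam k N₀ → ℝ) :
    Differentiable ℝ fun x : EuclideanSpace ℝ (Fin k) => canonicalPairing θ x.ofLp := by
  unfold canonicalPairing
  fun_prop

lemma differentiable_fourierChar_canonicalPairing (θ : Gam k N₀ → ℝ) :
    Differentiable ℝ fun x : EuclideanSpace ℝ (Fin k) => (𝐞 (canonicalPairing θ x.ofLp) : ℂ) :=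
  Real.differentiable_fourierChar.comp (differentiable_canonicalPairing θ)

lemma mul_norm_fderiv_canonicalPairing_le (θ : Gam k N₀ → ℝ) {y : EuclideanSpace ℝ (Fin k)} {R : ℝ}
    (hy : ‖y‖ ≤ R) :
    R * ‖fderiv ℝ (fun x : EuclideanSpace ℝ (Fin k) => canonicalPairing θ x.ofLp) y‖ ≤
      k * N₀ * anisotropicNorm R θ := by
  have R_nonneg : 0 ≤ R := (norm_nonneg y).trans hy
  have mul_norm_term_le (γ : Gam k N₀) :
      R * ‖fderiv ℝ (fun x : EuclideanSpace ℝ (Fin k) => θ γ * ∏ i, x i ^ (γ.1 i : ℕ)) y‖ ≤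
        k * N₀ * (|θ γ| * R ^ γ.degree) := by
    rw [fderiv_const_mul (by fun_prop), norm_smul, Real.norm_eq_abs]
    calc R * (|θ γ| * ‖fderiv ℝ (fun x : EuclideanSpace ℝ (Fin k) => ∏ i, x i ^ (γ.1 i : ℕ)) y‖)
        ≤ R * (|θ γ| * (γ.degree * R ^ (γ.degree - 1))) := by
          gcongr
          exact norm_fderiv_monomial_le _ hy
      _ = γ.degree * (|θ γ| * R ^ γ.degree) := by
          rcases Nat.eq_zero_or_pos γ.degree with h | h
          · simp [h]
          · rw [← mul_pow_sub_one h.ne' R]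
            ring
      _ ≤ k * N₀ * (|θ γ| * R ^ γ.degree) := by
          gcongr
          exact_mod_cast γ.degree_le
  simp only [canonicalPairing, anisotropicNorm]
  rw [fderiv_fun_sum fun γ _ => by fun_prop, Finset.mul_sum]
  calc R * ‖∑ γ : Gam k N₀,
          fderiv ℝ (fun x : EuclideanSpace ℝ (Fin k) => θ γ * ∏ i, x i ^ (γ.1 i : ℕ)) y‖
      ≤ ∑ γ : Gam k N₀,
          R * ‖fderiv ℝ (fun x : EuclideanSpace ℝ (Fin k) => θ γ * ∏ i, x i ^ (γ.1 i : ℕ)) y‖ := by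
        rw [← Finset.mul_sum]
        gcongr
        exact norm_sum_le _ _
    _ ≤ _ := Finset.sum_le_sum fun γ _ => mul_norm_term_le γ

end Derivatives

lemma le_inv_pow_of_pow_mul_le_one {r t x : ℝ} {n : ℕ} (hr : 0 < r) (hrt : r ≤ t) (hx : 0 ≤ x)
    (h : t ^ n * x ≤ 1) : x ≤ r⁻¹ ^ n := by
  rw [inv_pow, ← one_div, le_div_iff₀' (by positivity)]
  calc r ^ n * x ≤ t ^ n * x := by gcongr
    _ ≤ 1 := h

section KernelAtScale

variable {k N₀ : ℕ} {R : ℝ} {K : EuclideanSpace ℝ (Fin k) → ℂ}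

/-- Dyadic pieces of a singular kernel, at scale `R`: `K` lives on the annulus `R/4 ≤ ‖y‖ ≤ R` and
has the size and smoothness of `‖y‖^(-k)` there. -/
structure IsKernelAtScale (R : ℝ) (K : EuclideanSpace ℝ (Fin k) → ℂ) : Prop where
  differentiable : Differentiable ℝ K
  annulus : ∀ y, K y ≠ 0 → R / 4 ≤ ‖y‖ ∧ ‖y‖ ≤ R
  bound : ∀ y, ‖y‖ ^ k * ‖K y‖ + ‖y‖ ^ (k + 1) * ‖fderiv ℝ K y‖ ≤ 1

namespace IsKernelAtScale

lemma norm_le (hK : IsKernelAtScale R K) (hR : 0 < R) (y : EuclideanSpace ℝ (Fin k)) :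
    ‖K y‖ ≤ (4 / R) ^ k := by
  by_cases hy : K y = 0
  · rw [hy, norm_zero]
    positivity
  · rw [← inv_div R 4]
    refine le_inv_pow_of_pow_mul_le_one (by positivity) (hK.annulus y hy).1
      (norm_nonneg _) ?_
    have := hK.bound y
    have : 0 ≤ ‖y‖ ^ (k + 1) * ‖fderiv ℝ K y‖ := by positivity
    linarith

lemma mem_annulus_of_fderiv_ne_zero (hK : IsKernelAtScale R K) {y : EuclideanSpace ℝ (Fin k)}
    (hy : fderiv ℝ K y ≠ 0) : R / 4 ≤ ‖y‖ ∧ ‖y‖ ≤ R := by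
  have isClosed_annulus : IsClosed {x : EuclideanSpace ℝ (Fin k) | R / 4 ≤ ‖x‖ ∧ ‖x‖ ≤ R} :=
    (isClosed_le continuous_const continuous_norm).inter
      (isClosed_le continuous_norm continuous_const)
  exact closure_minimal hK.annulus isClosed_annulus (support_fderiv_subset ℝ hy)

lemma norm_fderiv_le (hK : IsKernelAtScale R K) (hR : 0 < R) (y : EuclideanSpace ℝ (Fin k)) :
    ‖fderiv ℝ K y‖ ≤ (4 / R) ^ (k + 1) := by
  by_cases hy : fderiv ℝ K y = 0
  · rw [hy, norm_zero]
    positivity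
  · rw [← inv_div R 4]
    refine le_inv_pow_of_pow_mul_le_one (by positivity) (hK.mem_annulus_of_fderiv_ne_zero hy).1
      (norm_nonneg _) ?_
    have := hK.bound y
    have : 0 ≤ ‖y‖ ^ k * ‖K y‖ := by positivity
    linarith

lemma norm_mul_norm_fderiv_canonicalPairing_le (hK : IsKernelAtScale R K) (hR : 0 < R)
    (θ : Gam k N₀ → ℝ) (y : EuclideanSpace ℝ (Fin k)) :
    ‖K y‖ * ‖fderiv ℝ (fun x : EuclideanSpace ℝ (Fin k) => canonicalPairing θ x.ofLp) y‖ ≤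
      (4 / R) ^ (k + 1) * (k * N₀ * anisotropicNorm R θ) := by
  by_cases hy : K y = 0
  · rw [hy, norm_zero, zero_mul]
    have := anisotropicNorm_nonneg hR.le θ
    positivity
  set N := ‖fderiv ℝ (fun x : EuclideanSpace ℝ (Fin k) => canonicalPairing θ x.ofLp) y‖ with hN
  calc ‖K y‖ * N ≤ (4 / R) ^ k * N := by
        gcongr
        exact hK.norm_le hR y
    _ ≤ (4 / R) ^ k * (4 * N) := by
        gcongr
        linarith [(norm_nonneg _).trans_eq hN.symm]
    _ = (4 / R) ^ (k + 1) * (R * N) := by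
        rw [pow_succ]
        field_simp
    _ ≤ _ := mul_le_mul_of_nonneg_left
        (mul_norm_fderiv_canonicalPairing_le θ (hK.annulus y hy).2) (by positivity)

lemma norm_le_of_modulatedKernel_toLp_ne_zero (hK : IsKernelAtScale R K) (hR : 0 ≤ R)
    {θ : Gam k N₀ → ℝ} {y : Fin k → ℝ} (hy : modulatedKernel θ K (WithLp.toLp 2 y) ≠ 0) :
    ‖y‖ ≤ R :=
  (pi_norm_le_iff_of_nonneg hR).2 fun i => (PiLp.norm_apply_le (WithLp.toLp 2 y) i).trans
    (hK.annulus _ (right_ne_zero_of_mul hy)).2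

end IsKernelAtScale

lemma norm_fderiv_modulatedKernel_le (hK : IsKernelAtScale R K) (hR : 0 < R) (θ : Gam k N₀ → ℝ)
    (y : EuclideanSpace ℝ (Fin k)) :
    ‖fderiv ℝ (modulatedKernel θ K) y‖ ≤
      (4 / R) ^ (k + 1) * (1 + 2 * Real.pi * (k * N₀) * anisotropicNorm R θ) := by
  let phase (x : EuclideanSpace ℝ (Fin k)) : ℝ := canonicalPairing θ x.ofLp
  calc ‖fderiv ℝ (modulatedKernel θ K) y‖
      = ‖(𝐞 (phase y) : ℂ) • fderiv ℝ K y + K y • fderiv ℝ (fun x => (𝐞 (phase x) : ℂ)) y‖ := by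
        rw [← fderiv_fun_mul (differentiable_fourierChar_canonicalPairing θ y)
          (hK.differentiable y)]
        rfl
    _ ≤ ‖fderiv ℝ K y‖ + ‖K y‖ * ‖fderiv ℝ (fun x => (𝐞 (phase x) : ℂ)) y‖ := by
        refine (norm_add_le _ _).trans_eq ?_
        rw [norm_smul, norm_smul, Circle.norm_coe, one_mul]
    _ ≤ (4 / R) ^ (k + 1) + ‖K y‖ * (2 * Real.pi * ‖fderiv ℝ phase y‖) := by
        gcongr
        · exact hK.norm_fderiv_le hR y
        · exact norm_fderiv_fourierChar_comp_le (differentiable_canonicalPairing θ y)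
    _ = (4 / R) ^ (k + 1) + 2 * Real.pi * (‖K y‖ * ‖fderiv ℝ phase y‖) := by ring
    _ ≤ (4 / R) ^ (k + 1) +
          2 * Real.pi * ((4 / R) ^ (k + 1) * (k * N₀ * anisotropicNorm R θ)) := by
        gcongr _ + 2 * Real.pi * ?_
        exact hK.norm_mul_norm_fderiv_canonicalPairing_le hR θ y
    _ = _ := by ring

lemma lipschitzWith_modulatedKernel_toLp (hK : IsKernelAtScale R K) (hR : 0 < R)
    (θ : Gam k N₀ → ℝ) :
    LipschitzWith
      (√k * ((4 / R) ^ (k + 1) * (1 + 2 * Real.pi * (k * N₀) * anisotropicNorm R θ))).toNNReal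
      fun y => modulatedKernel θ K (WithLp.toLp 2 y) := by
  have lipschitz : LipschitzWith
      ((4 / R) ^ (k + 1) * (1 + 2 * Real.pi * (k * N₀) * anisotropicNorm R θ)).toNNReal
      (modulatedKernel θ K) := by
    refine lipschitzWith_of_nnnorm_fderiv_le (𝕜 := ℝ) ?_ fun y =>
      NNReal.le_toNNReal_of_coe_le (norm_fderiv_modulatedKernel_le hK hR θ y)
    exact (differentiable_fourierChar_canonicalPairing θ).mul hK.differentiable
  have lipschitz_toLp : LipschitzWith (√k).toNNReal (WithLp.toLp 2 : (Fin k → ℝ) → _) := by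
    convert PiLp.lipschitzWith_toLp 2 fun _ : Fin k => ℝ using 1
    ext
    simp [Real.sqrt_eq_rpow, Real.rpow_nonneg]
  rw [Real.toNNReal_mul (Real.sqrt_nonneg _), mul_comm]
  exact lipschitz.comp lipschitz_toLp

theorem norm_mSing_sub_gaussSumCan_mul_PhiSing_le (hK : IsKernelAtScale R K) (hR : 1 ≤ R) {q : ℕ}
    [NeZero q] (a : Gam k N₀ → ℕ) (ξ : Gam k N₀ → ℝ) :
    ‖mSing k N₀ K ξ - gaussSumCan k N₀ q a * PhiSing k N₀ K fun γ => ξ γ - (a γ : ℝ) / q‖ ≤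
      8 * 12 ^ k * √k * (1 + 2 * Real.pi * (k * N₀)) *
        (q / R * (1 + anisotropicNorm R fun γ => ξ γ - (a γ : ℝ) / q)) := by
  have R_pos : 0 < R := one_pos.trans_le hR
  set θ : Gam k N₀ → ℝ := fun γ => ξ γ - (a γ : ℝ) / q
  have anisotropicNorm_θ_nonneg := anisotropicNorm_nonneg R_pos.le θ
  let character (x : Fin k → ZMod q) : ℂ :=
    ZMod.stdAddChar (canonicalPairing (fun γ => (a γ : ZMod q)) x)
  have estimate := norm_latticeSum_sub_mean_mul_integral_le (h := character)
    (fun x => (AddChar.norm_apply _ _).le)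
    (fun y hy => (hK.norm_le_of_modulatedKernel_toLp_ne_zero R_pos.le hy).trans
      R.le_coe_toNNReal)
    (lipschitzWith_modulatedKernel_toLp hK R_pos θ)
  rw [← PhiSing_eq_integral_modulatedKernel, Fintype.card_fin, ← gaussSumCan_eq_mean,
    ← mSing_eq_latticeSum] at estimate
  refine estimate.trans ?_
  rw [Real.coe_toNNReal _ R_pos.le, Real.coe_toNNReal _ (by positivity)]
  calc 2 * (2 * R + 1) ^ k *
        (√k * ((4 / R) ^ (k + 1) * (1 + 2 * Real.pi * (k * N₀) * anisotropicNorm R θ))) * q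
      ≤ 2 * (3 * R) ^ k *
        (√k * ((4 / R) ^ (k + 1) *
          ((1 + 2 * Real.pi * (k * N₀)) * (1 + anisotropicNorm R θ)))) * q := by
        gcongr
        · linarith
        · have : 0 ≤ 2 * Real.pi * (k * N₀) := by positivity
          linarith
    _ = _ := by
        have : (3 * R) ^ k * (4 / R) ^ (k + 1) = 12 ^ k * (4 / R) := by
          rw [pow_succ, ← mul_assoc, ← mul_pow]
          congr 2
          field_simp
          norm_num
        linear_combination (2 * ((1 + 2 * Real.pi * (k * N₀)) *
          (1 + anisotropicNorm R θ)) * √k * q) * this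

end KernelAtScale

section Perturbation

variable {k N₀ : ℕ} {R L₁ : ℝ}

lemma anisotropicNorm_le {θ : Gam k N₀ → ℝ} {L₂ : ℝ} (hR : 0 ≤ R)
    (hθ : ∀ γ, |θ γ| ≤ L₂ / L₁ ^ γ.degree) :
    anisotropicNorm R θ ≤ L₂ * ∑ γ : Gam k N₀, (R / L₁) ^ γ.degree := by
  rw [anisotropicNorm, Finset.mul_sum]
  refine Finset.sum_le_sum fun γ _ => ?_
  calc |θ γ| * R ^ γ.degree ≤ L₂ / L₁ ^ γ.degree * R ^ γ.degree := by
        gcongr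
        exact hθ γ
    _ = L₂ * (R / L₁) ^ γ.degree := by
        rw [div_pow]
        ring

lemma sum_div_pow_degree_le_card (hR : 0 ≤ R) (hL₁ : R ≤ L₁) :
    ∑ γ : Gam k N₀, (R / L₁) ^ γ.degree ≤ Fintype.card (Gam k N₀) := by
  rw [Fintype.card_eq_sum_ones, Nat.cast_sum, Nat.cast_one]
  exact Finset.sum_le_sum fun γ _ =>
    pow_le_one₀ (div_nonneg hR (hR.trans hL₁)) (div_le_one_of_le₀ hL₁ (hR.trans hL₁))

end Perturbation

theorem statement17_general (k N₀ : ℕ) :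
    ∃ C : ℝ, 0 < C ∧
      ∀ R : ℝ, 1 ≤ R →
      ∀ K : EuclideanSpace ℝ (Fin k) → ℂ, IsKernelAtScale R K →
      ∀ L₁ L₂ L₃ : ℝ, R ≤ L₁ → 1 ≤ L₂ →
      ∀ q : ℕ, 1 ≤ q → (q : ℝ) ≤ L₃ →
      ∀ (a : Gam k N₀ → ℕ) (ξ : Gam k N₀ → ℝ),
        (∀ γ : Gam k N₀, |ξ γ - (a γ : ℝ) / q| ≤ L₂ / L₁ ^ γ.degree) →
        ‖mSing k N₀ K ξ -
            gaussSumCan k N₀ q a * PhiSing k N₀ K (fun γ => ξ γ - (a γ : ℝ) / q)‖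
            ≤ C * (L₃ / R + L₂ * L₃ / R * ∑ γ : Gam k N₀, (R / L₁) ^ γ.degree) ∧
        ‖mSing k N₀ K ξ -
            gaussSumCan k N₀ q a * PhiSing k N₀ K (fun γ => ξ γ - (a γ : ℝ) / q)‖
            ≤ C * (L₂ * L₃ / R) := by
  set c : ℝ := 8 * 12 ^ k * √k * (1 + 2 * Real.pi * (k * N₀))
  set n : ℝ := (Fintype.card (Gam k N₀) : ℝ)
  have c_nonneg : 0 ≤ c := by positivity
  have n_nonneg : 0 ≤ n := by positivity
  refine ⟨(c + 1) * (1 + n), by positivity, ?_⟩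
  intro R hR K hK L₁ L₂ L₃ hL₁ hL₂ q hq hqL₃ a ξ hξ
  have : NeZero q := ⟨by omega⟩
  have R_pos : 0 < R := one_pos.trans_le hR
  have L₃_nonneg : 0 ≤ L₃ := q.cast_nonneg.trans hqL₃
  set S := ∑ γ : Gam k N₀, (R / L₁) ^ γ.degree
  have S_nonneg : 0 ≤ S := Finset.sum_nonneg fun γ _ =>
    pow_nonneg (div_nonneg R_pos.le (R_pos.le.trans hL₁)) _
  have S_le : S ≤ n := sum_div_pow_degree_le_card R_pos.le hL₁
  have sharp : ‖mSing k N₀ K ξ -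
      gaussSumCan k N₀ q a * PhiSing k N₀ K fun γ => ξ γ - (a γ : ℝ) / q‖ ≤
      c * (L₃ / R * (1 + L₂ * S)) :=
    (norm_mSing_sub_gaussSumCan_mul_PhiSing_le hK hR a ξ).trans <| by
      gcongr
      · linarith [anisotropicNorm_nonneg R_pos.le fun γ => ξ γ - (a γ : ℝ) / q]
      · exact anisotropicNorm_le R_pos.le hξ
  constructor
  · calc _ ≤ c * (L₃ / R * (1 + L₂ * S)) := sharp
      _ ≤ (c + 1) * (1 + n) * (L₃ / R * (1 + L₂ * S)) := by
        gcongr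
        nlinarith
      _ = _ := by ring
  · calc _ ≤ c * (L₃ / R * (1 + L₂ * S)) := sharp
      _ ≤ (c + 1) * (L₃ / R * (L₂ + L₂ * n)) := by
        gcongr
        linarith
      _ = _ := by ring

/-- **Proposition 7.1 (Gaussian-sum approximation for dyadic singular pieces).** -/
theorem statement17 (k N₀ : ℕ) (hk : 1 ≤ k) (hN₀ : 1 ≤ N₀) :
    ∃ C : ℝ, 0 < C ∧
      ∀ j : ℕ, 1 ≤ j →
      ∀ K : EuclideanSpace ℝ (Fin k) → ℂ, ContDiff ℝ 1 K →
        (∀ y : EuclideanSpace ℝ (Fin k), K y ≠ 0 →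
          (2 : ℝ) ^ j / 4 ≤ ‖y‖ ∧ ‖y‖ ≤ (2 : ℝ) ^ j) →
        (∀ y : EuclideanSpace ℝ (Fin k),
          ‖y‖ ^ k * ‖K y‖ + ‖y‖ ^ (k + 1) * ‖fderiv ℝ K y‖ ≤ 1) →
      ∀ L₁ L₂ L₃ : ℝ, (2 : ℝ) ^ j ≤ L₁ → 1 ≤ L₂ → L₃ ≤ Real.sqrt ((2 : ℝ) ^ j) →
      ∀ q : ℕ, 1 ≤ q → (q : ℝ) ≤ L₃ →
      ∀ a : Gam k N₀ → ℕ, (∀ γ, 1 ≤ a γ ∧ a γ ≤ q) →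
        Nat.gcd q (Finset.univ.gcd a) = 1 →
      ∀ ξ : Gam k N₀ → ℝ, (∀ γ, 0 ≤ ξ γ ∧ ξ γ < 1) →
        (∀ γ : Gam k N₀,
          |ξ γ - (a γ : ℝ) / q| ≤
            L₂ / L₁ ^ (∑ i, ((γ : Fin k → Fin (N₀ + 1)) i : ℕ))) →
        ‖mSing k N₀ K ξ -
            gaussSumCan k N₀ q a * PhiSing k N₀ K (fun γ => ξ γ - (a γ : ℝ) / q)‖
            ≤ C * (L₃ / (2 : ℝ) ^ j + L₂ * L₃ / (2 : ℝ) ^ j *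
              ∑ γ : Gam k N₀,
                ((2 : ℝ) ^ j / L₁) ^ (∑ i, ((γ : Fin k → Fin (N₀ + 1)) i : ℕ))) ∧
        ‖mSing k N₀ K ξ -
            gaussSumCan k N₀ q a * PhiSing k N₀ K (fun γ => ξ γ - (a γ : ℝ) / q)‖
            ≤ C * (L₂ * L₃ / (2 : ℝ) ^ j) := by
  obtain ⟨C, hC, bounds⟩ := statement17_general k N₀
  refine ⟨C, hC, fun j _ K hK annulus bound L₁ L₂ L₃ hL₁ hL₂ _ q hq hqL₃ a _ _ ξ _ => ?_⟩
  exact bounds _ (one_le_pow₀ one_le_two) K ⟨hK.differentiable one_ne_zero, annulus, bound⟩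
    L₁ L₂ L₃ hL₁ hL₂ q hq hqL₃ a ξ

end
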